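/- Let k ≥ 2 be an integer and M ≥ 0. Let (ℱ_i)_{i=0}^n be a filtration on a probability space and let v_1, …, v_n be a martingale difference sequence with respect to it (each v_i is ℱ_i-measurable, integrable, and E[v_i | ℱ_{i−1}] = 0 almost surely), such that E[|v_i|^l] ≤ M for all l = 1, …, k and all i. Then there exists a constant C_k depending only on k (not on n, M, or the sequence) such that E[|n^{−1/2} ∑_{i=1}^n v_i|^k] ≤ C_k·M. -/

import Mathlib

open MeasureTheory

/-- Second-order Taylor bound for `x ^ (m + 2)` under a perturbation no larger than `x`. -/
theorem exists_add_pow_le_of_abs_le (m : ℕ) : ∃ c : ℝ, 0 ≤ c ∧ ∀ x y : ℝ, |y| ≤ x →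
    (x + y) ^ (m + 2) ≤ x ^ (m + 2) + (m + 2) * (x * x ^ m) * y + c * (x ^ m * y ^ 2) := by
  induction m with
  | zero =>
    refine ⟨1, zero_le_one, fun x y _ => le_of_eq ?_⟩
    push_cast
    ring
  | succ m ih =>
    obtain ⟨c, hc, h⟩ := ih
    refine ⟨m + 2 + 2 * c, by positivity, fun x y hy => ?_⟩
    obtain ⟨hy1, hy2⟩ := abs_le.mp hy
    have hx : 0 ≤ x := (abs_nonneg y).trans hy
    have h1 := mul_le_mul_of_nonneg_left (h x y hy) (by linarith : 0 ≤ x + y)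
    have h2 : 0 ≤ c * (x ^ m * y ^ 2) * (x - y) :=
      mul_nonneg (by positivity) (by linarith)
    push_cast
    linear_combination h1 + h2

/-- Second-order expansion of `|x + y| ^ (m + 2)` around `x`. -/
theorem exists_abs_add_pow_le (m : ℕ) : ∃ c : ℝ, 0 ≤ c ∧ ∀ x y : ℝ,
    |x + y| ^ (m + 2) ≤ |x| ^ (m + 2) + (m + 2) * (x * |x| ^ m) * y
      + c * (|x| ^ m * y ^ 2 + |y| ^ (m + 2)) := by
  obtain ⟨c, hc, h⟩ := exists_add_pow_le_of_abs_le m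
  refine ⟨c + (2 ^ (m + 2) + (m + 2)), by positivity, fun x y => ?_⟩
  rcases le_or_gt |y| |x| with hxy | hxy
  · have key : |x + y| ^ (m + 2) ≤ |x| ^ (m + 2) + (m + 2) * (x * |x| ^ m) * y
        + c * (|x| ^ m * y ^ 2) := by
      rcases le_total 0 x with hx | hx
      · rw [abs_of_nonneg hx] at hxy ⊢
        rw [abs_of_nonneg (by linarith [neg_abs_le y])]
        exact h x y hxy
      · rw [abs_of_nonpos hx] at hxy ⊢
        rw [abs_of_nonpos (by linarith [le_abs_self y])]
        have := h (-x) (-y) (by rwa [abs_neg])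
        rw [neg_add]
        linear_combination this
    have h1 : 0 ≤ (2 ^ (m + 2) + ((m : ℝ) + 2)) * (|x| ^ m * y ^ 2) := by positivity
    have h2 : 0 ≤ (c + (2 ^ (m + 2) + ((m : ℝ) + 2))) * |y| ^ (m + 2) := by positivity
    linear_combination key + h1 + h2
  · have h1 : |x + y| ^ (m + 2) ≤ 2 ^ (m + 2) * |y| ^ (m + 2) := by
      rw [← mul_pow]
      gcongr
      linarith [abs_add_le x y]
    have h2 : -((x * |x| ^ m) * y) ≤ |y| ^ (m + 2) := by
      calc -((x * |x| ^ m) * y) ≤ |(x * |x| ^ m) * y| := neg_le_abs _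
        _ = |x| ^ (m + 1) * |y| := by
          rw [abs_mul, abs_mul, abs_pow, abs_abs]
          ring
        _ ≤ |y| ^ (m + 1) * |y| := by gcongr
        _ = |y| ^ (m + 2) := by ring
    have h3 : 0 ≤ |x| ^ (m + 2) := by positivity
    have h4 : 0 ≤ (c + (2 ^ (m + 2) + ((m : ℝ) + 2))) * (|x| ^ m * y ^ 2) := by positivity
    have h5 : 0 ≤ c * |y| ^ (m + 2) := by positivity
    have h6 := mul_le_mul_of_nonneg_left h2 (by positivity : (0 : ℝ) ≤ m + 2)
    linear_combination h1 + h3 + h4 + h5 + h6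

theorem pow_mul_pow_le_pow_add_pow {a b : ℝ} (ha : 0 ≤ a) (hb : 0 ≤ b) (p q : ℕ) :
    a ^ p * b ^ q ≤ a ^ (p + q) + b ^ (p + q) := by
  rw [pow_add, pow_add]
  rcases le_total a b with h | h
  · have : a ^ p * b ^ q ≤ b ^ p * b ^ q := by gcongr
    have : 0 ≤ a ^ p * a ^ q := by positivity
    linarith
  · have : a ^ p * b ^ q ≤ a ^ p * a ^ q := by gcongr
    have : 0 ≤ b ^ p * b ^ q := by positivity
    linarith

theorem exists_abs_add_mul_pow_le (m : ℕ) : ∃ c : ℝ, 0 ≤ c ∧ ∀ r x y : ℝ, 0 ≤ r → r ≤ 1 →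
    |x + r * y| ^ (m + 2) ≤ (1 + c * r ^ 2) * |x| ^ (m + 2)
      + (m + 2) * r * (x * |x| ^ m * y) + 2 * c * r ^ 2 * |y| ^ (m + 2) := by
  obtain ⟨c, hc, h⟩ := exists_abs_add_pow_le m
  refine ⟨c, hc, fun r x y hr hr1 => ?_⟩
  have h1 := h x (r * y)
  have h2 : |x| ^ m * (r * y) ^ 2 ≤ r ^ 2 * (|x| ^ (m + 2) + |y| ^ (m + 2)) := by
    rw [mul_pow, ← sq_abs y, mul_left_comm]
    exact mul_le_mul_of_nonneg_left
      (pow_mul_pow_le_pow_add_pow (abs_nonneg x) (abs_nonneg y) m 2) (by positivity)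
  have h3 : |r * y| ^ (m + 2) ≤ r ^ 2 * |y| ^ (m + 2) := by
    rw [abs_mul, mul_pow, abs_of_nonneg hr]
    gcongr ?_ * _
    exact pow_le_pow_of_le_one hr hr1 (by omega)
  have h4 := mul_le_mul_of_nonneg_left (add_le_add h2 h3) hc
  linear_combination h1 + h4

/-- One martingale step: the first-order term of the expansion has mean zero. -/
theorem exists_integral_abs_add_mul_pow_le (m : ℕ) : ∃ c : ℝ, 0 ≤ c ∧
    ∀ {Ω : Type*} {𝒢 m0 : MeasurableSpace Ω} {P : Measure Ω} [IsFiniteMeasure P]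
      {X V : Ω → ℝ} {r : ℝ}, 𝒢 ≤ m0 → 0 ≤ r → r ≤ 1 →
      StronglyMeasurable[𝒢] X → Integrable (fun ω => |X ω| ^ (m + 2)) P → Integrable V P →
      Integrable (fun ω => |V ω| ^ (m + 2)) P → P[V|𝒢] =ᵐ[P] 0 →
      Integrable (fun ω => |X ω + r * V ω| ^ (m + 2)) P ∧
      ∫ ω, |X ω + r * V ω| ^ (m + 2) ∂P ≤ (1 + c * r ^ 2) * ∫ ω, |X ω| ^ (m + 2) ∂P
        + 2 * c * r ^ 2 * ∫ ω, |V ω| ^ (m + 2) ∂P := by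
  obtain ⟨c, hc, h⟩ := exists_abs_add_mul_pow_le m
  refine ⟨c, hc, ?_⟩
  intro Ω 𝒢 m0 P _ X V r h𝒢 hr hr1 hX hXi hV hVi hcond
  have hXm : AEStronglyMeasurable X P := (hX.mono h𝒢).aestronglyMeasurable
  have hY : StronglyMeasurable[𝒢] (fun ω => X ω * |X ω| ^ m) := hX.mul (hX.norm.pow m)
  have hYV : Integrable ((fun ω => X ω * |X ω| ^ m) * V) P := by
    refine (hXi.add hVi).mono' ((hY.mono h𝒢).aestronglyMeasurable.mul hV.1) (ae_of_all _ fun ω => ?_)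
    have := pow_mul_pow_le_pow_add_pow (abs_nonneg (X ω)) (abs_nonneg (V ω)) (m + 1) 1
    simp only [Pi.mul_apply, Pi.add_apply, Real.norm_eq_abs, abs_mul, abs_pow, abs_abs]
    linear_combination this
  have hzero : ∫ ω, X ω * |X ω| ^ m * V ω ∂P = 0 := by
    have h1 := condExp_mul_of_stronglyMeasurable_left hY hYV hV
    have h2 : P[(fun ω => X ω * |X ω| ^ m) * V|𝒢] =ᵐ[P] 0 := by
      filter_upwards [h1, hcond] with ω h1 h2
      simp [h1, h2]
    calc ∫ ω, X ω * |X ω| ^ m * V ω ∂P = ∫ ω, (P[(fun ω => X ω * |X ω| ^ m) * V|𝒢]) ω ∂P :=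
          (integral_condExp h𝒢).symm
      _ = 0 := by rw [integral_congr_ae h2]; simp
  have hYV' : Integrable (fun ω => (m + 2) * r * (X ω * |X ω| ^ m * V ω)) P := hYV.const_mul _
  have hXY : Integrable (fun ω => (1 + c * r ^ 2) * |X ω| ^ (m + 2)
      + (m + 2) * r * (X ω * |X ω| ^ m * V ω)) P := (hXi.const_mul _).add hYV'
  have hbound : Integrable (fun ω => (1 + c * r ^ 2) * |X ω| ^ (m + 2)
      + (m + 2) * r * (X ω * |X ω| ^ m * V ω) + 2 * c * r ^ 2 * |V ω| ^ (m + 2)) P :=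
    hXY.add (hVi.const_mul _)
  have hint : Integrable (fun ω => |X ω + r * V ω| ^ (m + 2)) P := by
    refine hbound.mono' ((hXm.add (hV.1.const_mul r)).norm.pow _) (ae_of_all _ fun ω => ?_)
    rw [Real.norm_of_nonneg (by positivity)]
    exact h r (X ω) (V ω) hr hr1
  refine ⟨hint, (integral_mono hint hbound fun ω => h r (X ω) (V ω) hr hr1).trans_eq ?_⟩
  rw [integral_add hXY (hVi.const_mul _),
    integral_add (hXi.const_mul _) hYV', integral_const_mul, integral_const_mul,
    integral_const_mul, hzero]
  ring

/-- For each integer `k ≥ 2` there is a constant `C = C_k`, depending only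
on `k`, such that for every martingale difference sequence `v 1, …, v n` (w.r.t. a filtration
`ℱ`) with `E[|v i|^l] ≤ M` for all `l = 1, …, k`, we have
`E[|n^{-1/2} ∑_{i=1}^n v i|^k] ≤ C · M`.  Expectations of nonnegative integrands are
expressed as lower Lebesgue integrals. -/
theorem stmt12 (k : ℕ) (hk : 2 ≤ k) :
    ∃ C : ℝ, 0 < C ∧
      ∀ (M : ℝ), 0 ≤ M →
      ∀ (n : ℕ) (Ω : Type) [m0 : MeasurableSpace Ω] (P : Measure Ω)
        [IsProbabilityMeasure P]
        (ℱ : Filtration ℕ m0) (v : ℕ → Ω → ℝ),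
        (∀ i, 1 ≤ i → i ≤ n → StronglyMeasurable[ℱ i] (v i)) →
        (∀ i, 1 ≤ i → i ≤ n → Integrable (v i) P) →
        (∀ i, 1 ≤ i → i ≤ n → P[v i|ℱ (i - 1)] =ᵐ[P] 0) →
        (∀ i, 1 ≤ i → i ≤ n → ∀ l : ℕ, 1 ≤ l → l ≤ k →
          ∫⁻ ω, ENNReal.ofReal (|v i ω| ^ l) ∂P ≤ ENNReal.ofReal M) →
        ∫⁻ ω, ENNReal.ofReal (|(1 / Real.sqrt n) * ∑ i ∈ Finset.Icc 1 n, v i ω| ^ k) ∂P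
          ≤ ENNReal.ofReal (C * M) := by
  obtain ⟨m, rfl⟩ := Nat.exists_eq_add_of_le' hk
  obtain ⟨c, hc, step⟩ := exists_integral_abs_add_mul_pow_le m
  refine ⟨2 * Real.exp c, by positivity, ?_⟩
  intro M hM n Ω m0 P _ ℱ v hmeas hvint hcond hmom
  rcases Nat.eq_zero_or_pos n with rfl | hn
  · simp
  set r : ℝ := 1 / Real.sqrt n with hr_def
  have hn1 : (1 : ℝ) ≤ n := by exact_mod_cast hn
  have hr : 0 ≤ r := by positivity
  have hr1 : r ≤ 1 := by
    rw [hr_def, div_le_one (by positivity)]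
    exact Real.one_le_sqrt.mpr hn1
  have hr2 : r ^ 2 * n = 1 := by
    rw [hr_def, div_pow, Real.sq_sqrt (by positivity)]
    field_simp
  have hpow_int : ∀ i, 1 ≤ i → i ≤ n → Integrable (fun ω => |v i ω| ^ (m + 2)) P := by
    intro i hi hin
    refine ⟨(hvint i hi hin).1.norm.pow _, ?_⟩
    rw [hasFiniteIntegral_iff_ofReal (ae_of_all _ fun ω => by positivity)]
    exact (hmom i hi hin (m + 2) (by omega) le_rfl).trans_lt ENNReal.ofReal_lt_top
  have hpow_le : ∀ i, 1 ≤ i → i ≤ n → ∫ ω, |v i ω| ^ (m + 2) ∂P ≤ M := by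
    intro i hi hin
    rw [← ENNReal.ofReal_le_ofReal_iff hM, ofReal_integral_eq_lintegral_ofReal
      (hpow_int i hi hin) (ae_of_all _ fun ω => by positivity)]
    exact hmom i hi hin (m + 2) (by omega) le_rfl
  have main : ∀ j ≤ n, Integrable (fun ω => |r * ∑ i ∈ Finset.Icc 1 j, v i ω| ^ (m + 2)) P ∧
      ∫ ω, |r * ∑ i ∈ Finset.Icc 1 j, v i ω| ^ (m + 2) ∂P + 2 * M
        ≤ (1 + c * r ^ 2) ^ j * (2 * M) := by
    intro j
    induction j with
    | zero => intro _; simp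
    | succ j ih =>
      intro hj
      obtain ⟨hint, hle⟩ := ih (by omega)
      have hS : StronglyMeasurable[ℱ j] (fun ω => r * ∑ i ∈ Finset.Icc 1 j, v i ω) := by
        refine StronglyMeasurable.const_mul ?_ r
        refine Finset.stronglyMeasurable_fun_sum _ fun i hi => ?_
        rw [Finset.mem_Icc] at hi
        exact (hmeas i hi.1 (by omega)).mono (ℱ.mono hi.2)
      obtain ⟨h1, h2⟩ := step (ℱ.le j) hr hr1 hS hint (hvint (j + 1) (by omega) hj)
        (hpow_int (j + 1) (by omega) hj) (hcond (j + 1) (by omega) hj)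
      have hsum : ∀ ω, r * ∑ i ∈ Finset.Icc 1 (j + 1), v i ω
          = r * ∑ i ∈ Finset.Icc 1 j, v i ω + r * v (j + 1) ω := fun ω => by
        rw [Finset.sum_Icc_succ_top (by omega), mul_add]
      simp only [hsum]
      refine ⟨h1, ?_⟩
      have h3 := mul_le_mul_of_nonneg_left (hpow_le (j + 1) (by omega) hj)
        (by positivity : 0 ≤ 2 * c * r ^ 2)
      have h4 := mul_le_mul_of_nonneg_left hle (by positivity : 0 ≤ 1 + c * r ^ 2)
      rw [pow_succ]
      linear_combination h2 + h3 + h4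
  obtain ⟨hint, hle⟩ := main n le_rfl
  rw [← ofReal_integral_eq_lintegral_ofReal hint (ae_of_all _ fun ω => by positivity)]
  refine ENNReal.ofReal_le_ofReal ?_
  have hexp : (1 + c * r ^ 2) ^ n ≤ Real.exp c := by
    calc (1 + c * r ^ 2) ^ n ≤ Real.exp (c * r ^ 2) ^ n := by
          gcongr
          linarith [Real.add_one_le_exp (c * r ^ 2)]
      _ = Real.exp c := by
          rw [← Real.exp_nat_mul]
          congr 1
          linear_combination c * hr2
  have := mul_le_mul_of_nonneg_right hexp (by positivity : 0 ≤ 2 * M)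
  linear_combination hle + this + 2 * hM
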